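/- Let n and k be integers with k ≥ 1 and n ≥ 2(k+1). Then ds_n maps the kernel of ds_n^{(k+1)} onto the kernel of ds_{n−2}^{(k)}: one has ds_n(ker ds_n^{(k+1)}) = ker ds_{n−2}^{(k)}, where ker ds_m^{(j)} := { f ∈ J_m : ds_m^{(j)}(f) = 0 }. -/

import Mathlib

/-!
Common setup: `R n` is the ring of Laurent polynomials
`ℤ[x₁^{±1}, …, xₙ^{±1}]`, realized as the group algebra over `ℤ` of the
group `ℤ^n` of exponent vectors (`AddMonoidAlgebra ℤ (Fin n → ℤ)`).
-/

noncomputable section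

/-- The ring `Rₙ = ℤ[x₁^{±1}, …, xₙ^{±1}]` of Laurent polynomials in `n` variables. -/
abbrev R (n : ℕ) : Type := AddMonoidAlgebra ℤ (Fin n → ℤ)

/-- The variable `xᵢ` of `R n` (`i` is a `0`-based index). -/
def X {n : ℕ} (i : Fin n) : R n := AddMonoidAlgebra.single (Pi.single i (1 : ℤ)) 1

/-- The inverse `xᵢ⁻¹` of the variable `xᵢ` of `R n`. -/
def Xinv {n : ℕ} (i : Fin n) : R n := AddMonoidAlgebra.single (Pi.single i (-1 : ℤ)) 1

/-- The action of a permutation `w` on exponent vectors. -/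
def permExp {n : ℕ} (w : Equiv.Perm (Fin n)) : (Fin n → ℤ) →+ (Fin n → ℤ) :=
  AddMonoidHom.mk' (fun m => m ∘ w.symm) (fun _ _ => rfl)

/-- The action of `w ∈ Sₙ` on `R n`, permuting the variables (`xᵢ ↦ x_{w i}`). -/
def permHom {n : ℕ} (w : Equiv.Perm (Fin n)) : R n →+* R n :=
  AddMonoidAlgebra.mapDomainRingHom ℤ (permExp w)

/-- `f` is a symmetric Laurent polynomial, i.e. `f ∈ Rₙ^{Sₙ}`. -/
def SymmP {n : ℕ} (f : R n) : Prop := ∀ w : Equiv.Perm (Fin n), permHom w f = f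

/-- The map of exponent groups underlying the evaluation
`xᵢ ↦ xᵢ (1 ≤ i ≤ n-2), x_{n-1} ↦ t, xₙ ↦ t⁻¹`; the second coordinate of the
target records the exponent of `t`. -/
def evExp (n : ℕ) : (Fin n → ℤ) →+ ((Fin (n - 2) → ℤ) × ℤ) :=
  AddMonoidHom.mk'
    (fun m => (fun i => m (Fin.castLE (Nat.sub_le n 2) i),
      if h : 2 ≤ n then m ⟨n - 2, by omega⟩ - m ⟨n - 1, by omega⟩ else 0))
    (by
      intro a b
      refine Prod.ext (funext fun i => rfl) ?_
      by_cases h : 2 ≤ n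
      · simp [h]; ring
      · simp [h])

/-- The evaluation homomorphism
`evₙ : ℤ[x₁^{±1},…,xₙ^{±1}] → ℤ[x₁^{±1},…,x_{n-2}^{±1}, t^{±1}]` determined by
`xᵢ ↦ xᵢ` for `1 ≤ i ≤ n-2`, `x_{n-1} ↦ t`, `xₙ ↦ t⁻¹`.  The target is realized
as the group algebra of `ℤ^{n-2} × ℤ`, the last factor recording the exponent
of `t`. -/
def ev (n : ℕ) : R n →+* AddMonoidAlgebra ℤ ((Fin (n - 2) → ℤ) × ℤ) :=
  AddMonoidAlgebra.mapDomainRingHom ℤ (evExp n)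

/-- An element of `ℤ[x₁^{±1},…,x_{n-2}^{±1}, t^{±1}]` "does not involve `t`",
i.e. it lies in the image of the subring `ℤ[x₁^{±1},…,x_{n-2}^{±1}]`. -/
def NoT (n : ℕ) (g : AddMonoidAlgebra ℤ ((Fin (n - 2) → ℤ) × ℤ)) : Prop :=
  g ∈ Set.range
    (AddMonoidAlgebra.mapDomainRingHom ℤ (AddMonoidHom.inl (Fin (n - 2) → ℤ) ℤ))

/-- `J n`: for `n ≥ 2`, the set of symmetric Laurent polynomials `f` such that
`evₙ f` does not involve `t`; for `n = 0, 1` it is all of `Rₙ^{Sₙ}`. -/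
def J (n : ℕ) : Set (R n) := {f | SymmP f ∧ (2 ≤ n → NoT n (ev n f))}

/-- Restriction of exponent vectors to the first `n - 2` coordinates. -/
def resExp (n : ℕ) : (Fin n → ℤ) →+ (Fin (n - 2) → ℤ) :=
  AddMonoidHom.mk' (fun m i => m (Fin.castLE (Nat.sub_le n 2) i)) (fun _ _ => rfl)

/-- The ring homomorphism `R n → R (n-2)` which, on `J n`, is the
Duflo–Serganova map `dsₙ`: for `f ∈ J n` it is exactly `evₙ f` regarded as an
element of `ℤ[x₁^{±1},…,x_{n-2}^{±1}]` (the `t`-degree-`0` part of `evₙ f`). -/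
def ds (n : ℕ) : R n →+* R (n - 2) :=
  AddMonoidAlgebra.mapDomainRingHom ℤ (resExp n)

/-- The product `∏_{1 ≤ i < j ≤ n} (1 - xᵢ xⱼ)`. -/
def P (n : ℕ) : R n :=
  ∏ p ∈ Finset.univ.filter (fun p : Fin n × Fin n => p.1 < p.2), (1 - X p.1 * X p.2)

/-- The iterated Duflo–Serganova map
`dsₙ^{(k)} = ds_{n-2k+2} ∘ ⋯ ∘ ds_{n-2} ∘ dsₙ : Rₙ → R_{n-2k}`, with
`dsₙ^{(0)}` the identity. -/
def dsIter (n : ℕ) : (k : ℕ) → R n →+* R (n - 2 * k)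
  | 0 => RingHom.id (R n)
  | k + 1 => (ds (n - 2 * k)).comp (dsIter n k)

/-! ### Basic homomorphisms -/

/-- The inclusion `R n → R n [t^{±1}]`. -/
def inc (n : ℕ) : R n →+* AddMonoidAlgebra ℤ ((Fin n → ℤ) × ℤ) :=
  AddMonoidAlgebra.mapDomainRingHom ℤ (AddMonoidHom.inl (Fin n → ℤ) ℤ)

/-- Setting `t = 1`. -/
def tOne (n : ℕ) : AddMonoidAlgebra ℤ ((Fin n → ℤ) × ℤ) →+* R n :=
  AddMonoidAlgebra.mapDomainRingHom ℤ (AddMonoidHom.fst (Fin n → ℤ) ℤ)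

/-- The variable `t`. -/
def tv (n : ℕ) : AddMonoidAlgebra ℤ ((Fin n → ℤ) × ℤ) := AddMonoidAlgebra.single (0, 1) 1

/-- The inverse of the variable `t`. -/
def tvi (n : ℕ) : AddMonoidAlgebra ℤ ((Fin n → ℤ) × ℤ) := AddMonoidAlgebra.single (0, -1) 1

theorem tv_mul_tvi (n : ℕ) : tv n * tvi n = 1 := by
  simp [tv, tvi, AddMonoidAlgebra.single_mul_single, AddMonoidAlgebra.one_def, Prod.zero_eq_mk]

theorem X_mul_Xinv {n : ℕ} (i : Fin n) : X i * Xinv i = 1 := by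
  simp [X, Xinv, AddMonoidAlgebra.single_mul_single, AddMonoidAlgebra.one_def, ← Pi.single_add]

theorem X_injective {n : ℕ} : Function.Injective (X : Fin n → R n) := by
  intro i j h
  by_contra hij
  have h2 := congrArg (fun f : R n => f.coeff (Pi.single i 1)) h
  have h3 : (Pi.single j (1 : ℤ) : Fin n → ℤ) ≠ Pi.single i 1 := by
    intro h4
    have := congrFun h4 i
    simp [hij] at this
  simp [X, h3] at h2

theorem hom_ext {n : ℕ} {S : Type*} [CommRing S] {φ ψ : R n →+* S}
    (h : ∀ i, φ (X i) = ψ (X i)) : φ = ψ := by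
  apply AddMonoidAlgebra.ringHom_ext'
  · exact RingHom.ext_int _ _
  · have hinv : ∀ i, φ (Xinv i) = ψ (Xinv i) := by
      intro i
      have h1 : φ (X i) * φ (Xinv i) = 1 := by rw [← map_mul, X_mul_Xinv, map_one]
      have h2 : ψ (X i) * ψ (Xinv i) = 1 := by rw [← map_mul, X_mul_Xinv, map_one]
      rw [h] at h1
      calc φ (Xinv i) = (ψ (X i) * ψ (Xinv i)) * φ (Xinv i) := by rw [h2, one_mul]
        _ = (ψ (X i) * φ (Xinv i)) * ψ (Xinv i) := by ring
        _ = ψ (Xinv i) := by rw [h1, one_mul]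
    have hsingle : ∀ (i : Fin n) (z : ℤ), φ (AddMonoidAlgebra.single (Pi.single i z) 1)
        = ψ (AddMonoidAlgebra.single (Pi.single i z) 1) := by
      intro i z
      obtain ⟨k, rfl | rfl⟩ := z.eq_nat_or_neg
      · have : (AddMonoidAlgebra.single (Pi.single i (k : ℤ)) 1 : R n) = X i ^ k := by
          simp [X, AddMonoidAlgebra.single_pow, ← Pi.single_smul]
        rw [this, map_pow, map_pow, h]
      · have : (AddMonoidAlgebra.single (Pi.single i (-(k : ℤ))) 1 : R n) = Xinv i ^ k := by
          simp [Xinv, AddMonoidAlgebra.single_pow, ← Pi.single_smul]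
        rw [this, map_pow, map_pow, hinv]
    refine MonoidHom.ext fun v => ?_
    have hv : ∀ s : Finset (Fin n),
        φ (AddMonoidAlgebra.single (∑ i ∈ s, Pi.single i (v.toAdd i)) 1)
          = ψ (AddMonoidAlgebra.single (∑ i ∈ s, Pi.single i (v.toAdd i)) 1) := by
      intro s
      induction s using Finset.induction_on with
      | empty => simp [← AddMonoidAlgebra.one_def]
      | insert a s ha ih =>
        rw [Finset.sum_insert ha]
        have : ∀ u w : Fin n → ℤ, (AddMonoidAlgebra.single (u + w) 1 : R n)
            = AddMonoidAlgebra.single u 1 * AddMonoidAlgebra.single w 1 := by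
          intro u w; simp [AddMonoidAlgebra.single_mul_single]
        rw [this, map_mul, map_mul, ih, hsingle]
    have := hv Finset.univ
    rw [Finset.univ_sum_single] at this
    simpa using this

theorem hom_ext_apply {n : ℕ} {S : Type*} [CommRing S] {φ ψ : R n →+* S}
    (h : ∀ i, φ (X i) = ψ (X i)) (f : R n) : φ f = ψ f := by rw [hom_ext h]

/-- The exponent map underlying the renaming of variables. -/
def pushExp {m n : ℕ} (e : Fin m → Fin n) : (Fin m → ℤ) →+ (Fin n → ℤ) where
  toFun v := ∑ i, Pi.single (e i) (v i)
  map_zero' := by simp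
  map_add' a b := by simp [Pi.single_add, Finset.sum_add_distrib]

/-- Renaming of variables `xᵢ ↦ x_{e i}`. -/
def push {m n : ℕ} (e : Fin m → Fin n) : R m →+* R n :=
  AddMonoidAlgebra.mapDomainRingHom ℤ (pushExp e)

@[simp] theorem push_X {m n : ℕ} (e : Fin m → Fin n) (i : Fin m) : push e (X i) = X (e i) := by
  have : pushExp e (Pi.single i 1) = Pi.single (e i) 1 := by
    simp only [pushExp, AddMonoidHom.coe_mk, ZeroHom.coe_mk]
    rw [Finset.sum_eq_single i]
    · simp
    · intro j _ hj; simp [hj]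
    · simp
  simp [push, X, this]

theorem permHom_eq {n : ℕ} (w : Equiv.Perm (Fin n)) : permHom w = push w := by
  apply hom_ext
  intro i
  rw [push_X]
  have : permExp w (Pi.single i 1) = Pi.single (w i) 1 := by
    funext j
    simp [permExp, Pi.single_apply, Equiv.symm_apply_eq]
  simp [permHom, X, this]

@[simp] theorem inc_X {n : ℕ} (i : Fin n) :
    inc n (X i) = AddMonoidAlgebra.single (Pi.single i 1, 0) 1 := by
  simp [inc, X]

/-- `ev (n+2)` with simplified type. -/
def ev2 (n : ℕ) : R (n + 2) →+* AddMonoidAlgebra ℤ ((Fin n → ℤ) × ℤ) := ev (n + 2)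

/-- `ds (n+2)` with simplified type. -/
def ds2 (n : ℕ) : R (n + 2) →+* R n := ds (n + 2)

@[simp] theorem ev2_X {n : ℕ} (i : Fin n) : ev2 n (X i.castSucc.castSucc) = inc n (X i) := by
  have : evExp (n + 2) (Pi.single i.castSucc.castSucc 1) = (Pi.single i 1, 0) := by
    refine Prod.ext ?_ ?_
    · funext j
      simp [evExp, Pi.single_apply, Fin.ext_iff]
    · have := i.2
      have h1 : n ≠ i := by omega
      have h2 : n + 1 ≠ i := by omega
      simp [evExp, Pi.single_apply, Fin.ext_iff, h1, h2]
  rw [inc_X]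
  simp only [ev2, ev, X, AddMonoidAlgebra.mapDomainRingHom_apply, AddMonoidAlgebra.mapDomain_single]
  rw [this]

@[simp] theorem ev2_X1 {n : ℕ} : ev2 n (X (Fin.last n).castSucc) = tv n := by
  have : evExp (n + 2) (Pi.single (Fin.last n).castSucc 1) = (0, 1) := by
    refine Prod.ext ?_ ?_
    · funext j
      have : (j : ℕ) < n := j.2
      simp [evExp, Pi.single_apply, Fin.ext_iff]
      omega
    · simp [evExp, Pi.single_apply, Fin.ext_iff]
  simp only [ev2, ev, X, AddMonoidAlgebra.mapDomainRingHom_apply, AddMonoidAlgebra.mapDomain_single]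
  rw [this]; rfl

@[simp] theorem ev2_X2 {n : ℕ} : ev2 n (X (Fin.last (n + 1))) = tvi n := by
  have : evExp (n + 2) (Pi.single (Fin.last (n + 1)) 1) = (0, -1) := by
    refine Prod.ext ?_ ?_
    · funext j
      have : (j : ℕ) < n := j.2
      simp [evExp, Pi.single_apply, Fin.ext_iff]
      omega
    · simp [evExp, Pi.single_apply, Fin.ext_iff]
  simp only [ev2, ev, X, AddMonoidAlgebra.mapDomainRingHom_apply, AddMonoidAlgebra.mapDomain_single]
  rw [this]; rfl

@[simp] theorem tOne_inc {n : ℕ} (f : R n) : tOne n (inc n f) = f := by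
  have : (tOne n).comp (inc n) = RingHom.id _ := by
    apply hom_ext; intro i; simp [tOne]; simp [X]
  exact DFunLike.congr_fun this f

theorem inc_injective {n : ℕ} : Function.Injective (inc n) :=
  Function.LeftInverse.injective tOne_inc

theorem ds2_eq {n : ℕ} (f : R (n + 2)) : ds2 n f = tOne n (ev2 n f) := by
  have : ds2 n = (tOne n).comp (ev2 n) := by
    unfold ds2 tOne ev2 ds ev
    rw [← AddMonoidAlgebra.mapDomainRingHom_comp]
    rfl
  rw [this]; rfl

@[simp] theorem tOne_tv {n : ℕ} : tOne n (tv n) = 1 := by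
  simp [tOne, tv, AddMonoidAlgebra.one_def]

@[simp] theorem tOne_tvi {n : ℕ} : tOne n (tvi n) = 1 := by
  simp [tOne, tvi, AddMonoidAlgebra.one_def]

theorem mem_J2 {n : ℕ} (f : R (n + 2)) :
    f ∈ J (n + 2) ↔ SymmP f ∧ ev2 n f = inc n (ds2 n f) := by
  constructor
  · rintro ⟨h1, h2⟩
    refine ⟨h1, ?_⟩
    obtain ⟨g, hg⟩ := h2 (by omega)
    have hg' : inc n g = ev2 n f := hg
    rw [ds2_eq, ← hg', tOne_inc]
  · rintro ⟨h1, h2⟩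
    exact ⟨h1, fun _ => ⟨ds2 n f, h2.symm⟩⟩

/-! ### Divisibility by differences of variables -/

theorem push_push {l m n : ℕ} (e : Fin m → Fin n) (e' : Fin l → Fin m) (f : R l) :
    push e (push e' f) = push (e ∘ e') f := by
  have : (push e).comp (push e') = push (e ∘ e') := by
    apply hom_ext; intro i; simp
  exact DFunLike.congr_fun this f

theorem push_id {n : ℕ} (f : R n) : push id f = f := by
  have : push (id : Fin n → Fin n) = RingHom.id _ := by
    apply hom_ext; intro i; simp
  rw [this]; rfl

/-- The map of indices sending `a` to `b`. -/
def coll {n : ℕ} (a b : Fin n) : Fin n → Fin n := fun i => if i = a then b else i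

theorem diff_dvd_iff {n : ℕ} (a b : Fin n) (f : R n) :
    (X a - X b) ∣ f ↔ push (coll a b) f = 0 := by
  constructor
  · rintro ⟨g, rfl⟩
    have : coll a b b = b := by simp [coll]
    simp [this]
    simp [coll]
  · intro h
    rw [← Ideal.mem_span_singleton, ← Ideal.Quotient.eq_zero_iff_mem]
    have : (Ideal.Quotient.mk (Ideal.span {X a - X b})).comp (push (coll a b)) =
        Ideal.Quotient.mk (Ideal.span {X a - X b}) := by
      apply hom_ext
      intro i
      simp only [RingHom.comp_apply, push_X, coll]
      split_ifs with hi
      · subst hi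
        rw [Ideal.Quotient.mk_eq_mk_iff_sub_mem, Ideal.mem_span_singleton]
        exact ⟨-1, by ring⟩
      · rfl
    rw [← this, RingHom.comp_apply, h, map_zero]

theorem diff_ne_zero {n : ℕ} {a b : Fin n} (h : a ≠ b) : (X a - X b : R n) ≠ 0 :=
  sub_ne_zero.mpr (fun h' => h (X_injective h'))

theorem diff_prime {n : ℕ} {a b : Fin n} (h : a ≠ b) : Prime (X a - X b : R n) := by
  refine ⟨diff_ne_zero h, ?_, ?_⟩
  · intro hu
    have := (diff_dvd_iff a b 1).mp hu.dvd
    simp at this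
  · intro f g hfg
    rw [diff_dvd_iff, map_mul, mul_eq_zero] at hfg
    simpa only [diff_dvd_iff] using hfg

theorem diff_not_dvd {n : ℕ} {a b c d : Fin n} (h : a < b) (h' : c < d) (hne : (a, b) ≠ (c, d)) :
    ¬ (X a - X b : R n) ∣ X c - X d := by
  rw [diff_dvd_iff, map_sub, push_X, push_X, sub_eq_zero]
  intro h2
  have h3 := X_injective h2
  simp only [coll] at h3
  apply hne
  split_ifs at h3 with h4 h5 h5
  · subst h4 h5; exact absurd h' (lt_irrefl _)
  · subst h4 h3; rfl
  · subst h5 h3; exact absurd (h.trans h') (lt_irrefl _)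
  · subst h3; exact absurd h' (lt_irrefl _)

theorem antisymm_dvd {n : ℕ} {a b : Fin n} (f : R n)
    (hf : push (Equiv.swap a b) f = -f) : (X a - X b) ∣ f := by
  rw [diff_dvd_iff]
  have h1 : push (coll a b) (push (Equiv.swap a b) f) = push (coll a b) f := by
    rw [push_push]
    congr 2
    funext i
    simp only [Function.comp, coll, Equiv.swap_apply_def]
    split_ifs <;> simp_all
  rw [hf, map_neg] at h1
  apply AddMonoidAlgebra.ext
  ext v
  have h2 := congrArg (fun q : R n => q.coeff v) h1
  simp only [AddMonoidAlgebra.coeff_neg, Finsupp.neg_apply] at h2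
  simp only [AddMonoidAlgebra.coeff_zero, Finsupp.zero_apply]
  omega

theorem prod_sq_dvd {ι : Type*} {S : Type*} [CommRing S] [IsDomain S] [DecidableEq ι]
    (s : Finset ι) (p : ι → S) (hp : ∀ i ∈ s, Prime (p i))
    (hd : ∀ i ∈ s, ∀ j ∈ s, i ≠ j → ¬ p i ∣ p j) (f : S) (hf : ∀ i ∈ s, p i ^ 2 ∣ f) :
    ∏ i ∈ s, p i ^ 2 ∣ f := by
  induction s using Finset.induction_on with
  | empty => simp
  | insert a s ha ih =>
    obtain ⟨f', hf'⟩ := ih (fun i hi => hp i (Finset.mem_insert_of_mem hi))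
      (fun i hi j hj => hd i (Finset.mem_insert_of_mem hi) j (Finset.mem_insert_of_mem hj))
      (fun i hi => hf i (Finset.mem_insert_of_mem hi))
    have hpa := hp a (Finset.mem_insert_self _ _)
    have h1 : ¬ p a ∣ ∏ i ∈ s, p i ^ 2 := by
      intro h
      obtain ⟨i, hi, h2⟩ := (hpa.dvd_finsetProd_iff _).mp h
      exact hd a (Finset.mem_insert_self _ _) i (Finset.mem_insert_of_mem hi)
        (fun h => ha (h ▸ hi)) (hpa.dvd_of_dvd_pow h2)
    have h3 := hf a (Finset.mem_insert_self _ _)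
    rw [hf'] at h3
    obtain ⟨c, hc⟩ := hpa.pow_dvd_of_dvd_mul_left 2 h1 h3
    rw [Finset.prod_insert ha, hf', hc]
    exact ⟨c, by ring⟩

/-! ### The numerators -/

/-- The factor of the numerator attached to a pair of indices. -/
def cf {n : ℕ} (I : Finset (Fin n)) (i j : Fin n) : R n :=
  if i ∈ I ∧ j ∉ I then 1 - X i * X j else if i = j then 1 else X i - X j

/-- The product of all factors of the numerator. -/
def Cp {n : ℕ} (I : Finset (Fin n)) : R n := ∏ i, ∏ j, cf I i j

theorem push_Cp {n : ℕ} (w : Equiv.Perm (Fin n)) (I : Finset (Fin n)) :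
    push w (Cp I) = Cp (I.map w.toEmbedding) := by
  unfold Cp
  simp only [map_prod]
  refine Fintype.prod_equiv w _ _ fun i => ?_
  refine Fintype.prod_equiv w _ _ fun j => ?_
  simp only [cf, Finset.mem_map_equiv, Equiv.symm_apply_apply, apply_ite (push w), map_sub,
    map_mul, map_one, push_X, EmbeddingLike.apply_eq_iff_eq]

theorem Cp_empty_ne_zero {n : ℕ} : (Cp (∅ : Finset (Fin n))) ≠ 0 := by
  unfold Cp
  rw [Finset.prod_ne_zero_iff]
  intro i _
  rw [Finset.prod_ne_zero_iff]
  intro j _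
  simp only [cf, Finset.notMem_empty, false_and, if_false]
  split_ifs with h
  · exact one_ne_zero
  · exact diff_ne_zero h

theorem Cp_univ {n : ℕ} : (Cp (Finset.univ : Finset (Fin n))) = Cp ∅ := by
  simp [Cp, cf]

theorem diff_dvd_Cp {n : ℕ} {a b : Fin n} (hab : a ≠ b) (I : Finset (Fin n)) :
    (X a - X b) ∣ Cp I := by
  have key : ∀ i j, cf I i j ∣ Cp I := fun i j =>
    (Finset.dvd_prod_of_mem (fun j => cf I i j) (Finset.mem_univ j)).trans
      (Finset.dvd_prod_of_mem (fun i => ∏ j, cf I i j) (Finset.mem_univ i))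
  by_cases h : a ∈ I ∧ b ∉ I
  · have h2 := key b a
    simp only [cf, h.2, false_and, if_false, if_neg hab.symm] at h2
    rw [← neg_sub]
    exact (neg_dvd).mpr h2
  · have h2 := key a b
    simpa only [cf, h, if_false, if_neg hab] using h2

theorem Cp_empty_dvd {n : ℕ} (f : R n)
    (hf : ∀ a b : Fin n, a < b → (X a - X b : R n) ^ 2 ∣ f) : Cp (∅ : Finset (Fin n)) ∣ f := by
  have h1 : ∏ p ∈ Finset.univ.filter (fun p : Fin n × Fin n => p.1 < p.2),
      (X p.1 - X p.2 : R n) ^ 2 ∣ f := by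
    apply prod_sq_dvd
    · intro p hp
      simp only [Finset.mem_filter, Finset.mem_univ, true_and] at hp
      exact diff_prime hp.ne
    · intro p hp q hq hpq
      simp only [Finset.mem_filter, Finset.mem_univ, true_and] at hp hq
      exact diff_not_dvd hp hq hpq
    · intro p hp
      simp only [Finset.mem_filter, Finset.mem_univ, true_and] at hp
      exact hf _ _ hp
  refine dvd_trans ?_ h1
  have h2 : ∀ i j : Fin n, cf ∅ i j = (if i < j then X i - X j else 1) *
      (if j < i then X i - X j else 1) := by
    intro i j
    simp only [cf, Finset.notMem_empty, false_and, if_false]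
    rcases lt_trichotomy i j with h | h | h
    · simp [h, h.ne, h.not_gt]
    · simp [h]
    · simp [h, h.ne', h.not_gt]
  have h3 : Cp (∅ : Finset (Fin n)) = (∏ i : Fin n, ∏ j : Fin n, if i < j then X i - X j else 1) *
      (∏ i : Fin n, ∏ j : Fin n, if i < j then X j - X i else 1) := by
    unfold Cp
    simp only [h2, Finset.prod_mul_distrib]
    congr 1
    exact Finset.prod_comm
  rw [h3, Finset.prod_filter, ← Finset.univ_product_univ, Finset.prod_product]
  simp only [← Finset.prod_mul_distrib]
  refine Finset.prod_dvd_prod_of_dvd _ _ fun i _ => ?_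
  refine Finset.prod_dvd_prod_of_dvd _ _ fun j _ => ?_
  split_ifs
  · exact ⟨-1, by ring⟩
  · simp

/-- The symmetric Laurent polynomial `g`, evaluated at the variables with index in `I`. -/
def gI {m n : ℕ} (g : R m) (I : Finset (Fin n)) : R n :=
  if h : I.card = m then push (I.orderEmbOfFin h) g else 0

theorem gI_eq {m n : ℕ} {g : R m} (hg : SymmP g) (I : Finset (Fin n)) (e : Fin m → Fin n)
    (he : Function.Injective e) (hI : ∀ x, x ∈ I ↔ ∃ i, e i = x) : gI g I = push e g := by
  have hcard : I.card = m := by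
    have : I = Finset.univ.map ⟨e, he⟩ := by ext x; simp [hI]
    rw [this]; simp
  rw [gI, dif_pos hcard]
  have h1 : ∀ i, ∃ j, I.orderEmbOfFin hcard j = e i := by
    intro i
    have : e i ∈ Set.range (I.orderEmbOfFin hcard) := by
      rw [Finset.range_orderEmbOfFin]; exact (hI _).mpr ⟨i, rfl⟩
    exact this
  choose s hs using h1
  have hsi : Function.Injective s := by
    intro i j hij
    apply he
    rw [← hs, ← hs, hij]
  let w : Equiv.Perm (Fin m) := Equiv.ofBijective s (Finite.injective_iff_bijective.mp hsi)
  have hw : e = (I.orderEmbOfFin hcard) ∘ w := by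
    funext i; exact (hs i).symm
  rw [hw, ← push_push]
  have := hg w
  rw [permHom_eq] at this
  rw [this]

theorem mem_ord {m n : ℕ} {I : Finset (Fin n)} (h : I.card = m) (x : Fin n) :
    x ∈ I ↔ ∃ i, I.orderEmbOfFin h i = x := by
  rw [← Finset.mem_coe, ← I.range_orderEmbOfFin h]; rfl

theorem push_gI {m n : ℕ} {g : R m} (hg : SymmP g) (w : Equiv.Perm (Fin n)) (I : Finset (Fin n)) :
    push w (gI g I) = gI g (I.map w.toEmbedding) := by
  by_cases h : I.card = m
  · rw [gI_eq hg (I.map w.toEmbedding) (w ∘ I.orderEmbOfFin h)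
      (w.injective.comp (I.orderEmbOfFin h).injective), gI, dif_pos h, push_push]
    intro x
    rw [Finset.mem_map_equiv, mem_ord h]
    simp only [Equiv.eq_symm_apply, Function.comp]
  · rw [gI, gI, dif_neg h, dif_neg (by simpa using h), map_zero]

/-- The numerator. -/
def Nm {m : ℕ} (g : R m) (n : ℕ) : R n :=
  ∑ I ∈ Finset.powersetCard m (Finset.univ : Finset (Fin n)), gI g I * Cp I

theorem push_Nm {m : ℕ} {g : R m} (hg : SymmP g) {n : ℕ} (w : Equiv.Perm (Fin n)) :
    push w (Nm g n) = Nm g n := by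
  unfold Nm
  rw [map_sum]
  refine Finset.sum_equiv (Equiv.finsetCongr w) ?_ ?_
  · intro I; simp [Finset.mem_powersetCard]
  · intro I _
    rw [map_mul, push_gI hg, push_Cp]
    rfl

theorem exists_quot {m : ℕ} {g : R m} (hg : SymmP g) (n : ℕ) :
    ∃ f : R n, Nm g n = Cp ∅ * f := by
  apply Cp_empty_dvd
  intro a b hab
  have h1 : (X a - X b : R n) ∣ Nm g n :=
    Finset.dvd_sum fun I _ => (diff_dvd_Cp hab.ne I).mul_left _
  obtain ⟨M, hM⟩ := h1
  have h2 := push_Nm hg (Equiv.swap a b)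
  rw [hM, map_mul, map_sub, push_X, push_X, Equiv.swap_apply_left, Equiv.swap_apply_right] at h2
  have h3 : push (Equiv.swap a b) M = -M := by
    apply mul_left_cancel₀ (diff_ne_zero hab.ne)
    linear_combination -h2
  obtain ⟨M', hM'⟩ := antisymm_dvd M h3
  rw [hM, hM']
  exact ⟨M', by ring⟩

/-- The lifts of `g`. -/
def Ef {m : ℕ} {g : R m} (hg : SymmP g) (n : ℕ) : R n := (exists_quot hg n).choose

theorem Ef_spec {m : ℕ} {g : R m} (hg : SymmP g) (n : ℕ) : Nm g n = Cp ∅ * Ef hg n :=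
  (exists_quot hg n).choose_spec

theorem Ef_symm {m : ℕ} {g : R m} (hg : SymmP g) (n : ℕ) : SymmP (Ef hg n) := by
  intro w
  have h := push_Nm hg w
  rw [Ef_spec hg, map_mul, push_Cp, Finset.map_empty] at h
  rw [permHom_eq]
  exact mul_left_cancel₀ Cp_empty_ne_zero h

theorem Ef_self {m : ℕ} {g : R m} (hg : SymmP g) : Ef hg m = g := by
  apply mul_left_cancel₀ (Cp_empty_ne_zero (n := m))
  rw [← Ef_spec hg]
  have h1 : Finset.powersetCard m (Finset.univ : Finset (Fin m)) = {Finset.univ} := by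
    have h2 := Finset.powersetCard_self (Finset.univ : Finset (Fin m))
    rwa [Finset.card_fin] at h2
  rw [Nm, h1, Finset.sum_singleton, Cp_univ, gI_eq hg Finset.univ id Function.injective_id,
    push_id, mul_comm]
  intro x; simp

/-! ### Vanishing -/

/-- A section of the evaluation. -/
def rho (l : ℕ) : AddMonoidAlgebra ℤ ((Fin l → ℤ) × ℤ) →+* R (l + 2) :=
  AddMonoidAlgebra.mapDomainRingHom ℤ
    (AddMonoidHom.coprod (pushExp (fun i : Fin l => i.castSucc.castSucc))
      (AddMonoidHom.single (fun _ : Fin (l + 2) => ℤ) (Fin.last l).castSucc))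

theorem rho_inc {l : ℕ} (i : Fin l) : rho l (inc l (X i)) = X i.castSucc.castSucc := by
  rw [← push_X (fun i : Fin l => i.castSucc.castSucc)]
  rw [inc_X, rho, push, X]
  simp

theorem rho_tv {l : ℕ} : rho l (tv l) = X (Fin.last l).castSucc := by
  simp [rho, tv, X]

theorem rho_tvi {l : ℕ} : rho l (tvi l) = Xinv (Fin.last l).castSucc := by
  simp [rho, tvi, Xinv]

theorem fin_cases2 {n : ℕ} {p : Fin (n + 2) → Prop} (h1 : ∀ i : Fin n, p i.castSucc.castSucc)
    (h2 : p (Fin.last n).castSucc) (h3 : p (Fin.last (n + 1))) : ∀ i, p i := by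
  intro i
  induction i using Fin.lastCases with
  | last => exact h3
  | cast i =>
    induction i using Fin.lastCases with
    | last => exact h2
    | cast i => exact h1 i

theorem dvd_of_ev {l : ℕ} {g : R (l + 2)} (hg : ev2 l g = 0) :
    (1 - X (Fin.last l).castSucc * X (Fin.last (l + 1))) ∣ g := by
  set p : R (l + 2) := 1 - X (Fin.last l).castSucc * X (Fin.last (l + 1)) with hp
  rw [← Ideal.mem_span_singleton, ← Ideal.Quotient.eq_zero_iff_mem]
  have : ((Ideal.Quotient.mk (Ideal.span {p})).comp (rho l)).comp (ev2 l) =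
      Ideal.Quotient.mk (Ideal.span {p}) := by
    apply hom_ext
    apply fin_cases2
    · intro i; simp only [RingHom.comp_apply, ev2_X, rho_inc]
    · simp only [RingHom.comp_apply, ev2_X1, rho_tv]
    · simp only [RingHom.comp_apply, ev2_X2, rho_tvi]
      rw [Ideal.Quotient.mk_eq_mk_iff_sub_mem, Ideal.mem_span_singleton]
      refine ⟨Xinv (Fin.last l).castSucc, ?_⟩
      rw [hp]
      linear_combination (X (Fin.last (l + 1))) * X_mul_Xinv (Fin.last l).castSucc
  rw [← this, RingHom.comp_apply, hg, map_zero]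

theorem dvd_of_ev_symm {l : ℕ} {g : R (l + 2)} (hs : SymmP g) (hg : ev2 l g = 0)
    (i j : Fin (l + 2)) (hij : i ≠ j) : (1 - X i * X j) ∣ g := by
  obtain ⟨π, h1, h2⟩ : ∃ π : Equiv.Perm (Fin (l + 2)), π (Fin.last l).castSucc = i ∧
      π (Fin.last (l + 1)) = j := by
    have huv : (Fin.last l).castSucc ≠ Fin.last (l + 1) := (Fin.castSucc_lt_last _).ne
    let σ := Equiv.swap (Fin.last l).castSucc i
    have hσ : σ (Fin.last l).castSucc = i := Equiv.swap_apply_left _ _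
    refine ⟨σ.trans (Equiv.swap (σ (Fin.last (l + 1))) j), ?_, ?_⟩
    · rw [Equiv.trans_apply, hσ, Equiv.swap_apply_of_ne_of_ne _ hij]
      intro h
      rw [← hσ] at h
      exact huv (σ.injective h)
    · rw [Equiv.trans_apply, Equiv.swap_apply_left]
  have h3 := map_dvd (push π) (dvd_of_ev hg)
  have h4 := hs π
  rw [permHom_eq] at h4
  simpa only [h4, map_sub, map_mul, map_one, push_X, h1, h2] using h3

theorem ev2_gI_zero {l n : ℕ} {g : R (l + 2)} (hs : SymmP g) (hg : ev2 l g = 0)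
    (I : Finset (Fin (n + 2))) (h1 : (Fin.last n).castSucc ∈ I) (h2 : Fin.last (n + 1) ∈ I) :
    ev2 n (gI g I) = 0 := by
  by_cases h : I.card = l + 2
  · rw [gI, dif_pos h]
    have hr := I.range_orderEmbOfFin h
    rw [← Finset.mem_coe, ← hr] at h1 h2
    obtain ⟨i, hi⟩ := h1
    obtain ⟨j, hj⟩ := h2
    have hij : i ≠ j := by
      rintro rfl
      exact (Fin.castSucc_lt_last (Fin.last n)).ne (hi.symm.trans hj)
    have h3 := map_dvd (ev2 n) (map_dvd (push (I.orderEmbOfFin h)) (dvd_of_ev_symm hs hg i j hij))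
    simpa only [map_sub, map_one, map_mul, push_X, hi, hj, ev2_X1, ev2_X2, tv_mul_tvi, sub_self,
      zero_dvd_iff] using h3
  · rw [gI, dif_neg h, map_zero]

/-! ### Evaluation of the numerators -/

/-- The embedding of indices. -/
def cc (n : ℕ) : Fin n ↪ Fin (n + 2) :=
  ⟨fun i => i.castSucc.castSucc, (Fin.castSucc_injective _).comp (Fin.castSucc_injective _)⟩

theorem cc_apply {n : ℕ} (i : Fin n) : cc n i = i.castSucc.castSucc := rfl

theorem mem_up {n : ℕ} (I : Finset (Fin n)) (i : Fin n) :
    i.castSucc.castSucc ∈ I.map (cc n) ↔ i ∈ I := by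
  rw [← cc_apply, Finset.mem_map']

theorem u_not_mem {n : ℕ} (I : Finset (Fin n)) : (Fin.last n).castSucc ∉ I.map (cc n) := by
  intro h
  obtain ⟨i, -, hi⟩ := Finset.mem_map.mp h
  rw [cc_apply] at hi
  exact (Fin.castSucc_lt_last i).ne (Fin.castSucc_injective _ hi)

theorem v_not_mem {n : ℕ} (I : Finset (Fin n)) : Fin.last (n + 1) ∉ I.map (cc n) := by
  intro h
  obtain ⟨i, -, hi⟩ := Finset.mem_map.mp h
  rw [cc_apply] at hi
  exact (Fin.castSucc_lt_last _).ne hi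

/-- The extra factor. -/
def Zf (n : ℕ) : AddMonoidAlgebra ℤ ((Fin n → ℤ) × ℤ) :=
  (∏ i : Fin n, (inc n (X i) - tv n) * (inc n (X i) - tvi n)) *
    ((∏ j : Fin n, (tv n - inc n (X j))) * (tv n - tvi n)) *
    ((∏ j : Fin n, (tvi n - inc n (X j))) * (tvi n - tv n))

theorem ev2_Cp {n : ℕ} (I : Finset (Fin n)) :
    ev2 n (Cp (I.map (cc n))) = inc n (Cp I) * Zf n := by
  have e1 : ∀ i j : Fin n, ev2 n (cf (I.map (cc n)) i.castSucc.castSucc j.castSucc.castSucc)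
      = inc n (cf I i j) := by
    intro i j
    simp only [cf, mem_up, Fin.castSucc_inj, apply_ite (ev2 n), apply_ite (inc n), map_sub, map_mul,
      map_one, ev2_X]
  have e2 : ∀ i : Fin n, ev2 n (cf (I.map (cc n)) i.castSucc.castSucc (Fin.last n).castSucc) *
      ev2 n (cf (I.map (cc n)) i.castSucc.castSucc (Fin.last (n + 1)))
      = (inc n (X i) - tv n) * (inc n (X i) - tvi n) := by
    intro i
    have h1 : i.castSucc.castSucc ≠ (Fin.last n).castSucc := fun h =>
      (Fin.castSucc_lt_last i).ne (Fin.castSucc_injective _ h)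
    have h2 : i.castSucc.castSucc ≠ Fin.last (n + 1) := (Fin.castSucc_lt_last _).ne
    by_cases hi : i ∈ I
    · simp only [cf, mem_up, u_not_mem, v_not_mem, hi, not_false_eq_true, and_self, if_true,
        map_sub, map_mul, map_one, ev2_X, ev2_X1, ev2_X2]
      linear_combination (inc n (X i) ^ 2 - 1) * tv_mul_tvi n
    · simp only [cf, mem_up, hi, false_and, if_false, h1, h2, map_sub, ev2_X, ev2_X1, ev2_X2]
  have e3 : ∀ j : Fin n, ev2 n (cf (I.map (cc n)) (Fin.last n).castSucc j.castSucc.castSucc)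
      = tv n - inc n (X j) := by
    intro i
    have h1 : (Fin.last n).castSucc ≠ i.castSucc.castSucc := fun h =>
      (Fin.castSucc_lt_last i).ne' (Fin.castSucc_injective _ h)
    simp only [cf, u_not_mem, false_and, if_false, h1, map_sub, ev2_X, ev2_X1]
  have e4 : ∀ j : Fin n, ev2 n (cf (I.map (cc n)) (Fin.last (n + 1)) j.castSucc.castSucc)
      = tvi n - inc n (X j) := by
    intro i
    have h2 : Fin.last (n + 1) ≠ i.castSucc.castSucc := (Fin.castSucc_lt_last _).ne'
    simp only [cf, v_not_mem, false_and, if_false, h2, map_sub, ev2_X, ev2_X2]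
  have huv : (Fin.last n).castSucc ≠ Fin.last (n + 1) := (Fin.castSucc_lt_last _).ne
  have e5 : ev2 n (cf (I.map (cc n)) (Fin.last n).castSucc (Fin.last n).castSucc) = 1 := by
    simp only [cf, u_not_mem, false_and, if_false, if_true, map_one]
  have e6 : ev2 n (cf (I.map (cc n)) (Fin.last n).castSucc (Fin.last (n + 1))) = tv n - tvi n := by
    simp only [cf, u_not_mem, false_and, if_false, huv, map_sub, ev2_X1, ev2_X2]
  have e7 : ev2 n (cf (I.map (cc n)) (Fin.last (n + 1)) (Fin.last n).castSucc) = tvi n - tv n := by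
    simp only [cf, v_not_mem, false_and, if_false, huv.symm, map_sub, ev2_X1, ev2_X2]
  have e8 : ev2 n (cf (I.map (cc n)) (Fin.last (n + 1)) (Fin.last (n + 1))) = 1 := by
    simp only [cf, v_not_mem, false_and, if_false, if_true, map_one]
  unfold Cp
  simp only [map_prod]
  rw [Fin.prod_univ_castSucc, Fin.prod_univ_castSucc]
  simp only [Fin.prod_univ_castSucc (n := n + 1)]
  simp only [Fin.prod_univ_castSucc (n := n)]
  simp only [mul_assoc, e1, e2, e3, e4, e5, e6, e7, e8, Zf, Finset.prod_mul_distrib]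
  ring

theorem Zf_ne_zero (n : ℕ) : Zf n ≠ 0 := by
  have h1 : tv n ≠ tvi n := by
    intro h
    have h2 := congrArg (fun q : AddMonoidAlgebra ℤ ((Fin n → ℤ) × ℤ) => q.coeff (0, 1)) h
    simp [tv, tvi] at h2
  have h3 : ∀ i : Fin n, inc n (X i) ≠ tv n := by
    intro i h
    have h2 := congrArg (fun q : AddMonoidAlgebra ℤ ((Fin n → ℤ) × ℤ) => q.coeff (0, 1)) h
    simp [tv] at h2
  have h4 : ∀ i : Fin n, inc n (X i) ≠ tvi n := by
    intro i h
    have h2 := congrArg (fun q : AddMonoidAlgebra ℤ ((Fin n → ℤ) × ℤ) => q.coeff (0, -1)) h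
    simp [tvi] at h2
  unfold Zf
  refine mul_ne_zero (mul_ne_zero ?_ (mul_ne_zero ?_ ?_)) (mul_ne_zero ?_ ?_)
  · exact Finset.prod_ne_zero_iff.mpr fun i _ =>
      mul_ne_zero (sub_ne_zero.mpr (h3 i)) (sub_ne_zero.mpr (h4 i))
  · exact Finset.prod_ne_zero_iff.mpr fun i _ => sub_ne_zero.mpr (h3 i).symm
  · exact sub_ne_zero.mpr h1
  · exact Finset.prod_ne_zero_iff.mpr fun i _ => sub_ne_zero.mpr (h4 i).symm
  · exact sub_ne_zero.mpr h1.symm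

theorem ev2_gI {m n : ℕ} {g : R m} (hg : SymmP g) (I : Finset (Fin n)) :
    ev2 n (gI g (I.map (cc n))) = inc n (gI g I) := by
  by_cases h : I.card = m
  · rw [gI_eq hg (I.map (cc n)) (cc n ∘ I.orderEmbOfFin h)
      ((cc n).injective.comp (I.orderEmbOfFin h).injective), gI, dif_pos h]
    · rw [← RingHom.comp_apply, ← RingHom.comp_apply]
      apply hom_ext_apply
      intro i
      simp only [RingHom.comp_apply, push_X, Function.comp, cc_apply, ev2_X]
    · intro x
      rw [Finset.mem_map]
      simp only [mem_ord h, Function.comp]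
      constructor
      · rintro ⟨_, ⟨i, rfl⟩, rfl⟩; exact ⟨i, rfl⟩
      · rintro ⟨i, rfl⟩; exact ⟨_, ⟨i, rfl⟩, rfl⟩
  · rw [gI, gI, dif_neg h, dif_neg (by simpa using h), map_zero, map_zero]

theorem Cp_zero {n : ℕ} (I : Finset (Fin (n + 2)))
    (h : ((Fin.last n).castSucc ∈ I ∧ Fin.last (n + 1) ∉ I) ∨
      (Fin.last (n + 1) ∈ I ∧ (Fin.last n).castSucc ∉ I)) : ev2 n (Cp I) = 0 := by
  have key : ∀ i j, ev2 n (cf I i j) = 0 → ev2 n (Cp I) = 0 := by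
    intro i j h0
    unfold Cp
    simp only [map_prod]
    exact Finset.prod_eq_zero (Finset.mem_univ i) (Finset.prod_eq_zero (Finset.mem_univ j) h0)
  rcases h with h | h
  · apply key _ _
    rw [cf, if_pos h]
    simp [tv_mul_tvi]
  · apply key _ _
    rw [cf, if_pos h]
    simp [tv_mul_tvi, mul_comm (tvi n)]

theorem ev2_Nm {l n : ℕ} {g : R (l + 2)} (hs : SymmP g) (hg : ev2 l g = 0) :
    ev2 n (Nm g (n + 2)) = inc n (Nm g n) * Zf n := by
  unfold Nm
  rw [map_sum, map_sum, Finset.sum_mul]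
  symm
  apply Finset.sum_of_injOn (fun I => I.map (cc n))
  · exact (Finset.map_injective (cc n)).injOn
  · intro I hI
    simpa [Finset.mem_powersetCard] using hI
  · intro I hI hI'
    rw [map_mul]
    by_cases h1 : (Fin.last n).castSucc ∈ I <;> by_cases h2 : Fin.last (n + 1) ∈ I
    · rw [ev2_gI_zero hs hg I h1 h2, zero_mul]
    · rw [Cp_zero I (Or.inl ⟨h1, h2⟩), mul_zero]
    · rw [Cp_zero I (Or.inr ⟨h2, h1⟩), mul_zero]
    · exfalso
      apply hI'
      have hI0 : (Finset.univ.filter (fun i : Fin n => i.castSucc.castSucc ∈ I)).map (cc n) = I := by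
        ext x
        revert x
        apply fin_cases2
        · intro i; rw [mem_up]; simp
        · simp only [u_not_mem, h1]
        · simp only [v_not_mem, h2]
      refine ⟨_, ?_, hI0⟩
      rw [Finset.mem_coe]
      rw [Finset.mem_powersetCard] at hI ⊢
      refine ⟨Finset.subset_univ _, ?_⟩
      rw [← hI.2, ← Finset.card_map (cc n), hI0]
  · intro I _
    rw [map_mul, map_mul, ev2_gI hs, ev2_Cp, mul_assoc]

theorem ev2_Ef {l : ℕ} {g : R (l + 2)} (hs : SymmP g) (hg : ev2 l g = 0) (n : ℕ) :
    ev2 n (Ef hs (n + 2)) = inc n (Ef hs n) := by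
  have h := ev2_Nm (n := n) hs hg
  have h0 : (∅ : Finset (Fin (n + 2))) = (∅ : Finset (Fin n)).map (cc n) := by simp
  rw [Ef_spec hs, Ef_spec hs, map_mul, map_mul, h0, ev2_Cp] at h
  have h1 : inc n (Cp ∅) ≠ 0 := by
    intro h2
    rw [← map_zero (inc n)] at h2
    exact Cp_empty_ne_zero (inc_injective h2)
  apply mul_left_cancel₀ (mul_ne_zero h1 (Zf_ne_zero n))
  rw [h]; ring

theorem Ef_mem_J {l : ℕ} {g : R (l + 2)} (hs : SymmP g) (hg : ev2 l g = 0) (n : ℕ) :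
    Ef hs (n + 2) ∈ J (n + 2) ∧ ds (n + 2) (Ef hs (n + 2)) = Ef hs n := by
  have h1 : ds2 n (Ef hs (n + 2)) = Ef hs n := by
    rw [ds2_eq, ev2_Ef hs hg, tOne_inc]
  refine ⟨(mem_J2 _).mpr ⟨Ef_symm hs _, ?_⟩, h1⟩
  rw [h1, ev2_Ef hs hg]

/-! ### The map `ds` preserves `J` -/

@[simp] theorem ds2_X {n : ℕ} (i : Fin n) : ds2 n (X i.castSucc.castSucc) = X i := by
  rw [ds2_eq, ev2_X, tOne_inc]

@[simp] theorem ds2_X1 {n : ℕ} : ds2 n (X (Fin.last n).castSucc) = 1 := by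
  rw [ds2_eq, ev2_X1, tOne_tv]

@[simp] theorem ds2_X2 {n : ℕ} : ds2 n (X (Fin.last (n + 1))) = 1 := by
  rw [ds2_eq, ev2_X2, tOne_tvi]

theorem ds2_symm {n : ℕ} {f : R (n + 2)} (hf : SymmP f) : SymmP (ds2 n f) := by
  intro w
  have h1 := hf (w.viaFintypeEmbedding (cc n))
  rw [permHom_eq] at h1 ⊢
  conv_rhs => rw [← h1]
  rw [← RingHom.comp_apply, ← RingHom.comp_apply]
  apply hom_ext_apply
  apply fin_cases2
  · intro i
    simp only [RingHom.comp_apply, push_X, ds2_X]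
    rw [← cc_apply, Equiv.Perm.viaFintypeEmbedding_apply_image, cc_apply, ds2_X]
  · simp only [RingHom.comp_apply, push_X, ds2_X1, map_one]
    rw [Equiv.Perm.viaFintypeEmbedding_apply_notMem_range, ds2_X1]
    rintro ⟨i, hi⟩
    exact u_not_mem {i} (by rw [← hi]; simp)
  · simp only [RingHom.comp_apply, push_X, ds2_X2, map_one]
    rw [Equiv.Perm.viaFintypeEmbedding_apply_notMem_range, ds2_X2]
    rintro ⟨i, hi⟩
    exact v_not_mem {i} (by rw [← hi]; simp)

/-- `ds2` with `t` as an additional parameter. -/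
def kap (l : ℕ) : AddMonoidAlgebra ℤ ((Fin (l + 2) → ℤ) × ℤ) →+*
    AddMonoidAlgebra ℤ ((Fin l → ℤ) × ℤ) :=
  AddMonoidAlgebra.mapDomainRingHom ℤ
    (AddMonoidHom.prodMap (resExp (l + 2) : (Fin (l + 2) → ℤ) →+ (Fin l → ℤ)) (AddMonoidHom.id ℤ))

theorem kap_inc {l : ℕ} (f : R (l + 2)) : kap l (inc (l + 2) f) = inc l (ds2 l f) := by
  rw [← RingHom.comp_apply, ← RingHom.comp_apply]
  congr 1
  unfold kap inc ds2 ds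
  rw [← AddMonoidAlgebra.mapDomainRingHom_comp]
  refine Eq.trans ?_ (AddMonoidAlgebra.mapDomainRingHom_comp _ _)
  rfl

theorem kap_tv {l : ℕ} : kap l (tv (l + 2)) = tv l := by
  simp [kap, tv]

theorem kap_tvi {l : ℕ} : kap l (tvi (l + 2)) = tvi l := by
  simp [kap, tvi]

theorem ev_ds {l : ℕ} {f : R (l + 2 + 2)} (hf : SymmP f) :
    ev2 l (ds2 (l + 2) f) = kap l (ev2 (l + 2) f) := by
  let w : Equiv.Perm (Fin (l + 2 + 2)) :=
    (Equiv.swap (Fin.last l).castSucc.castSucc.castSucc (Fin.last (l + 2)).castSucc).trans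
      (Equiv.swap (Fin.last (l + 1)).castSucc.castSucc (Fin.last (l + 3)))
  have h1 := hf w
  rw [permHom_eq] at h1
  conv_rhs => rw [← h1]
  rw [← RingHom.comp_apply, ← RingHom.comp_apply, ← RingHom.comp_apply]
  apply hom_ext_apply
  have w1 : ∀ i : Fin l, w i.castSucc.castSucc.castSucc.castSucc =
      i.castSucc.castSucc.castSucc.castSucc := by
    intro i
    have := i.2
    simp only [w, Equiv.trans_apply, Equiv.swap_apply_def, Fin.ext_iff, Fin.val_castSucc,
      Fin.val_last]
    grind
  have w2 : w (Fin.last l).castSucc.castSucc.castSucc = (Fin.last (l + 2)).castSucc := by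
    simp only [w, Equiv.trans_apply, Equiv.swap_apply_def, Fin.ext_iff, Fin.val_castSucc,
      Fin.val_last]
    grind
  have w3 : w (Fin.last (l + 1)).castSucc.castSucc = Fin.last (l + 3) := by
    simp only [w, Equiv.trans_apply, Equiv.swap_apply_def, Fin.ext_iff, Fin.val_castSucc,
      Fin.val_last]
    grind
  have w4 : w (Fin.last (l + 2)).castSucc = (Fin.last l).castSucc.castSucc.castSucc := by
    simp only [w, Equiv.trans_apply, Equiv.swap_apply_def, Fin.ext_iff, Fin.val_castSucc,
      Fin.val_last]
    grind
  have w5 : w (Fin.last (l + 3)) = (Fin.last (l + 1)).castSucc.castSucc := by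
    simp only [w, Equiv.trans_apply, Equiv.swap_apply_def, Fin.ext_iff, Fin.val_castSucc,
      Fin.val_last]
    grind
  apply fin_cases2
  · apply fin_cases2
    · intro i
      simp only [RingHom.comp_apply, push_X, w1, ds2_X, ev2_X, kap_inc]
    · simp only [RingHom.comp_apply, push_X, w2, ds2_X, ev2_X1, kap_tv]
    · simp only [RingHom.comp_apply, push_X, w3, ds2_X, ev2_X2, kap_tvi]
  · simp only [RingHom.comp_apply, push_X, w4, ds2_X1, ev2_X, kap_inc, map_one]
  · simp only [RingHom.comp_apply, push_X, w5, ds2_X2, ev2_X, kap_inc, map_one]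

theorem ds_mem_J {n : ℕ} (hn : 2 ≤ n) {f : R n} (hf : f ∈ J n) : ds n f ∈ J (n - 2) := by
  obtain ⟨a, rfl⟩ : ∃ a, n = a + 2 := ⟨n - 2, by omega⟩
  rw [mem_J2] at hf
  change ds2 a f ∈ J a
  by_cases ha : 2 ≤ a
  · obtain ⟨l, rfl⟩ : ∃ l, a = l + 2 := ⟨a - 2, by omega⟩
    rw [mem_J2]
    refine ⟨ds2_symm hf.1, ?_⟩
    rw [ev_ds hf.1, hf.2, kap_inc]
  · exact ⟨ds2_symm hf.1, fun h => absurd h ha⟩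

theorem dsIter_mem_J {n : ℕ} {f : R n} (hf : f ∈ J n) (k : ℕ) (hk : 2 * k ≤ n) :
    dsIter n k f ∈ J (n - 2 * k) := by
  induction k with
  | zero => exact hf
  | succ k ih =>
    have h2 : 2 ≤ n - 2 * k := by omega
    exact ds_mem_J h2 (ih (by omega))

theorem ds_heq {a b : ℕ} (h : a = b) {f : R a} {g : R b} (hfg : HEq f g) :
    HEq (ds a f) (ds b g) := by
  subst h
  rw [eq_of_heq hfg]

theorem dsIter_heq (n k : ℕ) (f : R n) (hk : 2 * (k + 1) ≤ n) :
    HEq (dsIter n (k + 1) f) (dsIter (n - 2) k (ds n f)) := by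
  induction k with
  | zero => rfl
  | succ k ih => exact ds_heq (by omega) (ih (by omega))

theorem heq_zero {a b : ℕ} (h : a = b) {f : R a} {g : R b} (hfg : HEq f g) : f = 0 ↔ g = 0 := by
  subst h
  rw [eq_of_heq hfg]

theorem J_add {n : ℕ} {f g : R n} (hf : f ∈ J n) (hg : g ∈ J n) : f + g ∈ J n := by
  refine ⟨fun w => by rw [map_add, hf.1, hg.1], fun h => ?_⟩
  obtain ⟨a, ha⟩ := hf.2 h
  obtain ⟨b, hb⟩ := hg.2 h
  exact ⟨a + b, by rw [map_add, map_add, ha, hb]⟩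

theorem J_neg {n : ℕ} {f : R n} (hf : f ∈ J n) : -f ∈ J n := by
  refine ⟨fun w => by rw [map_neg, hf.1], fun h => ?_⟩
  obtain ⟨a, ha⟩ := hf.2 h
  exact ⟨-a, by rw [map_neg, map_neg, ha]⟩

theorem J_zero {n : ℕ} : (0 : R n) ∈ J n :=
  ⟨fun w => map_zero _, fun _ => ⟨0, by rw [map_zero, map_zero]⟩⟩

/-- Every element of `J m` killed by `ds` has a compatible family of lifts. -/
theorem exists_family {m : ℕ} (hm : 2 ≤ m) {g : R m} (hg : g ∈ J m) (h0 : ds m g = 0) :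
    ∃ E : (n : ℕ) → R n, E m = g ∧
      ∀ n, E (n + 2) ∈ J (n + 2) ∧ ds (n + 2) (E (n + 2)) = E n := by
  obtain ⟨l, rfl⟩ : ∃ l, m = l + 2 := ⟨m - 2, by omega⟩
  rw [mem_J2] at hg
  have h1 : ev2 l g = 0 := by
    have h2 : ds2 l g = 0 := h0
    rw [hg.2, h2, map_zero]
  exact ⟨Ef hg.1, Ef_self hg.1, Ef_mem_J hg.1 h1⟩

theorem dsIter_family (E : (n : ℕ) → R n) (hE : ∀ n, ds (n + 2) (E (n + 2)) = E n)
    (n k : ℕ) (hk : 2 * k ≤ n) : dsIter n k (E n) = E (n - 2 * k) := by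
  induction k with
  | zero => rfl
  | succ k ih =>
    have h1 : dsIter n (k + 1) (E n) = ds (n - 2 * k) (dsIter n k (E n)) := rfl
    rw [h1, ih (by omega)]
    have key : ∀ a, 2 ≤ a → ds a (E a) = E (a - 2) := by
      intro a ha
      obtain ⟨b, rfl⟩ : ∃ b, a = b + 2 := ⟨a - 2, by omega⟩
      exact hE b
    exact key _ (by omega)

theorem exists_lift (N k : ℕ) (hk : 2 * k ≤ N) (f : R N) (hf : f ∈ J N) (h0 : dsIter N k f = 0) :
    ∃ F : R (N + 2), F ∈ J (N + 2) ∧ ds (N + 2) F = f := by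
  induction k generalizing f with
  | zero =>
    have : f = 0 := h0
    exact ⟨0, J_zero, by rw [map_zero, this]⟩
  | succ k ih =>
    obtain ⟨E, hE1, hE2⟩ := exists_family (by omega) (dsIter_mem_J hf k (by omega)) h0
    have hEN : E N ∈ J N := by
      obtain ⟨b, rfl⟩ : ∃ b, N = b + 2 := ⟨N - 2, by omega⟩
      exact (hE2 b).1
    obtain ⟨F, hF1, hF2⟩ := ih (by omega) (f + -E N) (J_add hf (J_neg hEN)) (by
      rw [map_add, map_neg, dsIter_family E (fun n => (hE2 n).2) N k (by omega), hE1,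
        add_neg_cancel])
    refine ⟨F + E (N + 2), J_add hF1 (hE2 N).1, ?_⟩
    rw [map_add, hF2, (hE2 N).2]
    exact neg_add_cancel_right f (E N)

/-- For `k ≥ 1` and `n ≥ 2(k+1)`, the map `dsₙ` maps the
kernel of `dsₙ^{(k+1)}` (inside `Jₙ`) onto the kernel of `ds_{n-2}^{(k)}`
(inside `J_{n-2}`). -/
theorem ds_image_ker (n k : ℕ) (hk : 1 ≤ k) (hn : 2 * (k + 1) ≤ n) :
    ds n '' {f : R n | f ∈ J n ∧ dsIter n (k + 1) f = 0} =
      {g : R (n - 2) | g ∈ J (n - 2) ∧ dsIter (n - 2) k g = 0} := by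
  ext g
  constructor
  · rintro ⟨f, ⟨hf, h0⟩, rfl⟩
    exact ⟨ds_mem_J (by omega) hf, (heq_zero (by omega) (dsIter_heq n k f hn)).mp h0⟩
  · rintro ⟨hg, h0⟩
    obtain ⟨a, rfl⟩ : ∃ a, n = a + 2 := ⟨n - 2, by omega⟩
    obtain ⟨F, hF1, hF2⟩ := exists_lift a k (by omega) g hg h0
    refine ⟨F, ⟨hF1, (heq_zero (by omega) (dsIter_heq (a + 2) k F hn)).mpr ?_⟩, hF2⟩
    rw [hF2]
    exact h0

end
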